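/- arXiv:2201.04856 — 2 statements merged into one kernel-verified Lean document; each statement's English description precedes it below -/
import Mathlib

section
/- Let A be an arrangement of d ≥ 3 lines in the complex projective plane all of whose singular points are double points (i.e., no three lines of A are concurrent). Then extSS(A) ≤ (d−2)(d−3)/2; explicitly, there exists a supersolvable line arrangement B with A ⊆ B and |B| ≤ |A| + binom(d−2, 2). -/
/-!
Pick two lines `L₁, L₂` of `A` and let `P` be their intersection point. The other `d - 2` lines
form at most `(d-2).choose 2` pairs; for each pair, add the line joining `P` to the intersection
point of the pair. The resulting arrangement `B` has `P` as a modular point: if a singular point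
`Q ≠ P` of `B` lies on a line of `B` through `P`, that line joins `P` to `Q`; otherwise `Q` lies on
two lines of `A` other than `L₁` and `L₂`, and the line `PQ` has been added.

The added lines are provided by `exists_join_of_pair`, and the incidence geometry of
the plane is Mathlib's `Projectivization.orthogonal` and `Projectivization.cross`.
-/

open scoped Classical

noncomputable section

/-- The projective plane `ℙ²(ℂ)`, used both for points and for lines
(a line being recorded by its coefficient vector, up to scalar). -/
abbrev P2 := Projectivization ℂ (Fin 3 → ℂ)

lemma vne₀ {a b c : ℂ} (h : a ≠ 0) : ![a, b, c] ≠ 0 :=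
  fun hh => h (by simpa using congrFun hh 0)

lemma vne₁ {a b c : ℂ} (h : b ≠ 0) : ![a, b, c] ≠ 0 :=
  fun hh => h (by simpa using congrFun hh 1)

lemma vne₂ {a b c : ℂ} (h : c ≠ 0) : ![a, b, c] ≠ 0 :=
  fun hh => h (by simpa using congrFun hh 2)

/-- The point (or line) of `ℙ²(ℂ)` with homogeneous coordinates `[a : b : c]`. -/
def mkP (a b c : ℂ) (h : ![a, b, c] ≠ 0) : P2 := Projectivization.mk ℂ ![a, b, c] h

/-- Incidence: the point `p` lies on the line `L`
(the line being given by its coefficient vector, up to scalar). -/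
def Incid (p L : P2) : Prop := ∑ i : Fin 3, p.rep i * L.rep i = 0

/-- The multiplicity of a point `p` with respect to the line arrangement `A`:
the number of lines of `A` passing through `p`. -/
def mult (A : Finset P2) (p : P2) : ℕ := (A.filter fun L => Incid p L).card

/-- `p` is a singular point of the arrangement `A`: it lies on at least two of its lines. -/
def IsSing (A : Finset P2) (p : P2) : Prop := 2 ≤ mult A p

/-- The set of singular points of `A`. -/
def Sing (A : Finset P2) : Set P2 := {p | IsSing A p}

/-- `tr A r` is the number of singular points of `A` of multiplicity exactly `r`. -/
def tr (A : Finset P2) (r : ℕ) : ℕ := {p : P2 | mult A p = r}.ncard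

/-- `P` is a modular point of `A`: it is a singular point, and for every singular point
`Q ≠ P` the line through `P` and `Q` belongs to `A`. -/
def IsModular (A : Finset P2) (P : P2) : Prop :=
  IsSing A P ∧ ∀ Q : P2, IsSing A Q → Q ≠ P → ∃ L ∈ A, Incid P L ∧ Incid Q L

/-- A line arrangement in `ℙ²(ℂ)` is supersolvable iff it has a modular point. -/
def Supersolvable (A : Finset P2) : Prop := ∃ P : P2, IsModular A P

/-- The extension-to-supersolvability number: the least `k` such that `A` is contained in a
supersolvable arrangement with `|A| + k` lines. -/
def extSS (A : Finset P2) : ℕ :=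
  sInf {k : ℕ | ∃ B : Finset P2, A ⊆ B ∧ Supersolvable B ∧ B.card = A.card + k}

lemma incid_iff (p L : P2) : Incid p L ↔ p.orthogonal L := by
  conv_rhs => rw [← p.mk_rep, ← L.mk_rep]
  rw [Projectivization.orthogonal_mk]
  rfl

lemma isSing_iff (A : Finset P2) (p : P2) :
    IsSing A p ↔ ∃ L ∈ A, ∃ M ∈ A, L ≠ M ∧ Incid p L ∧ Incid p M := by
  unfold IsSing mult
  rw [← Nat.lt_iff_add_one_le, Finset.one_lt_card]
  simp only [Finset.mem_filter]
  constructor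
  · rintro ⟨L, ⟨hL, h1⟩, M, ⟨hM, h2⟩, hne⟩
    exact ⟨L, hL, M, hM, hne, h1, h2⟩
  · rintro ⟨L, hL, M, hM, hne, h1, h2⟩
    exact ⟨L, ⟨hL, h1⟩, M, ⟨hM, h2⟩, hne⟩

/-- Given a line `L₀` through `P` and a pair `s` of distinct lines, some line through `P` contains
every common point of `s`. It is the join of `P` and the intersection point of `s`, or `L₀` when
that point is `P` itself. -/
lemma exists_join_of_pair (P L₀ : P2) (h₀ : Incid P L₀) (s : Finset P2) (hs : s.card = 2) :
    ∃ M, Incid P M ∧ ∀ Q, Q ≠ P → (∀ L ∈ s, Incid Q L) → Incid Q M := by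
  obtain ⟨L, L', hne, rfl⟩ := Finset.card_eq_two.mp hs
  by_cases hex : ∃ R, R ≠ P ∧ Incid R L ∧ Incid R L'
  · obtain ⟨R, hRP, hRL, hRL'⟩ := hex
    refine ⟨Projectivization.cross P R,
      (incid_iff _ _).2 (Projectivization.orthogonal_cross_left hRP.symm), ?_⟩
    intro Q _ hQ
    have hQL := hQ L (by simp)
    have hQL' := hQ L' (by simp)
    rw [incid_iff] at *
    have hQR : Q = R :=
      (Configuration.ofField.eq_or_eq_of_orthogonal hQL hRL hQL' hRL').resolve_right hne
    rw [hQR]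
    exact Projectivization.orthogonal_cross_right hRP.symm
  · exact ⟨L₀, h₀, fun Q hQP hQ => absurd ⟨Q, hQP, hQ L (by simp), hQ L' (by simp)⟩ hex⟩

lemma exists_supersolvable_extension (A : Finset P2) (hA : 2 ≤ A.card) :
    ∃ B : Finset P2, A ⊆ B ∧ Supersolvable B ∧ B.card ≤ A.card + (A.card - 2).choose 2 := by
  obtain ⟨L₁, h₁, L₂, h₂, hne⟩ := Finset.one_lt_card.mp hA
  obtain ⟨P, hP₁, hP₂⟩ : ∃ P, Incid P L₁ ∧ Incid P L₂ :=
    ⟨Projectivization.cross L₁ L₂,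
      (incid_iff _ _).2 (Projectivization.cross_orthogonal_left hne),
      (incid_iff _ _).2 (Projectivization.cross_orthogonal_right hne)⟩
  choose! J hJP hJ using exists_join_of_pair P L₁ hP₁
  set A' := (A.erase L₁).erase L₂ with hA'
  have hcard : A'.card = A.card - 2 := by
    rw [hA', Finset.card_erase_of_mem (Finset.mem_erase.2 ⟨hne.symm, h₂⟩),
      Finset.card_erase_of_mem h₁]
    omega
  refine ⟨A ∪ (A'.powersetCard 2).image J, Finset.subset_union_left, ⟨P, ?_, ?_⟩, ?_⟩
  · exact (isSing_iff _ _).2 ⟨L₁, Finset.mem_union_left _ h₁, L₂, Finset.mem_union_left _ h₂,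
      hne, hP₁, hP₂⟩
  · intro Q hQ hQP
    obtain ⟨L, hL, M, hM, hLM, hQL, hQM⟩ := (isSing_iff _ _).1 hQ
    by_cases hPL : Incid P L
    · exact ⟨L, hL, hPL, hQL⟩
    by_cases hPM : Incid P M
    · exact ⟨M, hM, hPM, hQM⟩
    -- A line of `B` that misses `P` is neither `L₁`, `L₂` nor one of the added lines.
    have key : ∀ N ∈ A ∪ (A'.powersetCard 2).image J, ¬ Incid P N → N ∈ A' := by
      intro N hN hPN
      rcases Finset.mem_union.1 hN with hN | hN
      · rw [hA', Finset.mem_erase, Finset.mem_erase]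
        exact ⟨fun h => hPN (h ▸ hP₂), fun h => hPN (h ▸ hP₁), hN⟩
      · obtain ⟨s, hs, rfl⟩ := Finset.mem_image.1 hN
        exact absurd (hJP s (Finset.mem_powersetCard.1 hs).2) hPN
    have hpair : ({L, M} : Finset P2).card = 2 := Finset.card_pair hLM
    refine ⟨J {L, M}, Finset.mem_union_right _ (Finset.mem_image_of_mem _ ?_), hJP _ hpair,
      hJ _ hpair Q hQP ?_⟩
    · refine Finset.mem_powersetCard.2 ⟨?_, hpair⟩
      intro N hN
      rcases Finset.mem_insert.1 hN with rfl | hN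
      · exact key _ hL hPL
      · rw [Finset.mem_singleton.1 hN]
        exact key _ hM hPM
    · intro N hN
      rcases Finset.mem_insert.1 hN with rfl | hN
      · exact hQL
      · rw [Finset.mem_singleton.1 hN]
        exact hQM
  · calc (A ∪ (A'.powersetCard 2).image J).card
        ≤ A.card + ((A'.powersetCard 2).image J).card := Finset.card_union_le _ _
      _ ≤ A.card + (A'.powersetCard 2).card := Nat.add_le_add_left Finset.card_image_le _
      _ = A.card + (A.card - 2).choose 2 := by rw [Finset.card_powersetCard, hcard]

/-- If `A` is an arrangement of `d ≥ 3` lines in `ℙ²(ℂ)` all of whose singular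
points are double points, then `extSS(A) ≤ binom(d-2, 2) = (d-2)(d-3)/2`; explicitly, there is a
supersolvable arrangement `B ⊇ A` with `|B| ≤ |A| + binom(d-2, 2)`. -/
theorem stmt_0 (A : Finset P2) (hA : 3 ≤ A.card)
    (hdouble : ∀ p : P2, IsSing A p → mult A p = 2) :
    extSS A ≤ (A.card - 2).choose 2 ∧
    ∃ B : Finset P2, A ⊆ B ∧ Supersolvable B ∧ B.card ≤ A.card + (A.card - 2).choose 2 := by
  obtain ⟨B, hAB, hB, hcard⟩ := exists_supersolvable_extension A (by omega)
  refine ⟨?_, B, hAB, hB, hcard⟩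
  have hle := Finset.card_le_card hAB
  have hk : extSS A ≤ B.card - A.card := Nat.sInf_le ⟨B, hAB, hB, by omega⟩
  omega
end
end

section
/- Let k ≥ 2 and consider the Böröczky arrangement B_{6k} of n = 6k lines. Then extSS(B_{6k}) ≤ 6k² − 6k. More precisely, there exists a supersolvable line arrangement B with B_{6k} ⊆ B and |B| = 6k², whose singular points consist of exactly one point of multiplicity 6k² − 6k + 3, exactly 6(k−1)² points of multiplicity 4, exactly 15k − 12 points of multiplicity 3, and exactly 36k³ − 72k² + 42k − 3 points of multiplicity 2. -/
/-!
Write `n = 6k`. In the coordinate `v = e^{iα}` the line of the Böröczky arrangement at angle `α` is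
`w v³ - (x + iy) v² + (x - iy) v - w = 0` (`cubicLine`, `boroczkyLine_eq`), so the lines through a
point correspond to the `n`-th roots of unity that are roots of a cubic whose roots have product
`1` (`incid_third`). Hence no point has multiplicity above `3`, and the double points are those with
parameters `v, v, v⁻²`, `v³ ≠ 1`: there are `6k - 3` of them (`card_double`). The centre `P` of the
circle is a triple point, lying on the lines with `v³ = 1`, and each of these three lines carries
exactly one double point (`card_double_on_line`). Counting pairs of lines, over the whole plane and
along a single line, then gives the number of triple points of the arrangement and the number of
them on each line through `P`.

Exactly `6k² - 6k` singular points are not joined to `P` by a line of the arrangement. The required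
arrangement adds `6k² - 6k` lines through `P`, among them all lines joining `P` to these points
(`exists_extension`). Several of these points may lie on a common line through `P`; the pencil is
then filled up with arbitrary further lines through `P`, which does not affect the count: a point
other than `P` lies on at most one new line, so the points of multiplicity `4` are the old triple
points not joined to `P`, those of multiplicity `3` are the old triple points joined to `P` together
with the old double points not joined to `P`, and the number of double points follows by counting
pairs of lines.
-/

open scoped Classical

noncomputable section

lemma cs_ne_zero (t : ℝ) (c : ℂ) : ![(Real.cos t : ℂ), (Real.sin t : ℂ), c] ≠ 0 := by
  intro h
  have h0 : (Real.cos t : ℂ) = 0 := by simpa using congrFun h 0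
  have h1 : (Real.sin t : ℂ) = 0 := by simpa using congrFun h 1
  have hc : Real.cos t = 0 := by exact_mod_cast h0
  have hs : Real.sin t = 0 := by exact_mod_cast h1
  have h2 := Real.sin_sq_add_cos_sq t
  rw [hs, hc] at h2
  norm_num at h2

/-- The `k`-th line of the Böröczky arrangement of `n` lines.  Writing `α = 2kπ/n`, it is the
line through the unit-circle points `Q_α` and `Q_{π-2α}` (in the degenerate case
`α ≡ π-2α (mod 2π)` it is the tangent line to the circle at `Q_α`); in all cases it has the
equation `cos((π-α)/2)·x + sin((π-α)/2)·y - cos((3α-π)/2)·z = 0`. -/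
def boroczkyLine (n k : ℕ) : P2 :=
  mkP ((Real.cos ((Real.pi - 2 * k * Real.pi / n) / 2) : ℂ))
      ((Real.sin ((Real.pi - 2 * k * Real.pi / n) / 2) : ℂ))
      (-((Real.cos ((3 * (2 * k * Real.pi / n) - Real.pi) / 2) : ℂ)))
      (cs_ne_zero _ _)

/-- The Böröczky arrangement `B_n` of `n` lines. -/
def Boroczky (n : ℕ) : Finset P2 := (Finset.range n).image (boroczkyLine n)

/-- `T_n`, the set of triple points of `B_n`. -/
def Tn (n : ℕ) : Set P2 := {p : P2 | mult (Boroczky n) p = 3}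

/-! ### Incidence in the projective plane -/

lemma incid_iff_orthogonal (p L : P2) : Incid p L ↔ Projectivization.orthogonal p L := by
  conv_rhs => rw [← p.mk_rep, ← L.mk_rep, Projectivization.orthogonal_mk]
  rfl

lemma incid_comm {p L : P2} : Incid p L ↔ Incid L p := by
  simp only [incid_iff_orthogonal, Projectivization.orthogonal_comm]

lemma incid_mkP {p : P2} {a b c : ℂ} (h : ![a, b, c] ≠ 0) :
    Incid p (mkP a b c h) ↔ p.rep 0 * a + p.rep 1 * b + p.rep 2 * c = 0 := by
  rw [incid_iff_orthogonal]
  conv_lhs => rw [← p.mk_rep, mkP, Projectivization.orthogonal_mk]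
  simp [dotProduct, Fin.sum_univ_three]

/-- The intersection point of two distinct lines; by self-duality of the incidence relation it is
also the line joining two distinct points. -/
def meet (L M : P2) : P2 := Projectivization.cross L M

lemma meet_left {L M : P2} (h : L ≠ M) : Incid (meet L M) L :=
  (incid_iff_orthogonal _ _).2 (Projectivization.cross_orthogonal_left h)

lemma meet_right {L M : P2} (h : L ≠ M) : Incid (meet L M) M :=
  (incid_iff_orthogonal _ _).2 (Projectivization.cross_orthogonal_right h)

lemma eq_or_eq_of_incid {p q L M : P2} (h1 : Incid p L) (h2 : Incid q L) (h3 : Incid p M)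
    (h4 : Incid q M) : p = q ∨ L = M := by
  simp only [incid_iff_orthogonal] at *
  exact Configuration.ofField.eq_or_eq_of_orthogonal h1 h2 h3 h4

lemma eq_meet_iff {L M p : P2} (h : L ≠ M) : meet L M = p ↔ Incid p L ∧ Incid p M := by
  constructor
  · rintro rfl
    exact ⟨meet_left h, meet_right h⟩
  · rintro ⟨h1, h2⟩
    exact (eq_or_eq_of_incid (meet_left h) h1 (meet_right h) h2).resolve_right h

/-! ### Counting singular points -/

/-- The singular points of `A`, as a finite set. -/
def singF (A : Finset P2) : Finset P2 := A.offDiag.image fun x => meet x.1 x.2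

lemma mem_singF {A : Finset P2} {p : P2} : p ∈ singF A ↔ 2 ≤ mult A p := by
  have h : 2 ≤ mult A p ↔ 1 < (A.filter fun L => Incid p L).card := Iff.rfl
  rw [h, Finset.one_lt_card]
  simp only [singF, Finset.mem_image, Finset.mem_offDiag, Finset.mem_filter, Prod.exists]
  constructor
  · rintro ⟨L, M, ⟨hL, hM, hne⟩, hp⟩
    obtain ⟨h1, h2⟩ := (eq_meet_iff hne).1 hp
    exact ⟨L, ⟨hL, h1⟩, M, ⟨hM, h2⟩, hne⟩
  · rintro ⟨L, ⟨hL, h1⟩, M, ⟨hM, h2⟩, hne⟩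
    exact ⟨L, M, ⟨hL, hM, hne⟩, (eq_meet_iff hne).2 ⟨h1, h2⟩⟩

/-- The points of multiplicity `r` of `A`; this is the full set of such points when `r ≥ 2`. -/
def multF (A : Finset P2) (r : ℕ) : Finset P2 := (singF A).filter fun p => mult A p = r

lemma mem_multF {A : Finset P2} {r : ℕ} (hr : 2 ≤ r) {p : P2} :
    p ∈ multF A r ↔ mult A p = r := by
  rw [multF, Finset.mem_filter, mem_singF]
  omega

lemma tr_eq_card {A : Finset P2} {r : ℕ} (hr : 2 ≤ r) : tr A r = (multF A r).card := by
  rw [tr, ← Set.ncard_coe_finset]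
  congr 1
  ext p
  simp [mem_multF hr]

/-- Double counting of ordered pairs of distinct lines, sorted by their intersection point. -/
lemma sum_mult_mul_pred (A : Finset P2) :
    ∑ p ∈ singF A, mult A p * (mult A p - 1) = A.card * (A.card - 1) := by
  have hmaps : (A.offDiag : Set (P2 × P2)).MapsTo (fun x => meet x.1 x.2) (singF A) :=
    fun x hx => Finset.mem_coe.2 (Finset.mem_image_of_mem _ hx)
  have h := Finset.card_eq_sum_card_fiberwise hmaps
  rw [Finset.offDiag_card] at h
  rw [Nat.mul_sub_one, h]
  refine Finset.sum_congr rfl fun p _ => ?_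
  have : A.offDiag.filter (fun x => meet x.1 x.2 = p)
      = (A.filter fun L => Incid p L).offDiag := by
    ext ⟨L, M⟩
    simp only [Finset.mem_filter, Finset.mem_offDiag]
    constructor
    · rintro ⟨⟨hL, hM, hne⟩, hp⟩
      obtain ⟨h1, h2⟩ := (eq_meet_iff hne).1 hp
      exact ⟨⟨hL, h1⟩, ⟨hM, h2⟩, hne⟩
    · rintro ⟨⟨hL, h1⟩, ⟨hM, h2⟩, hne⟩
      exact ⟨⟨hL, hM, hne⟩, (eq_meet_iff hne).2 ⟨h1, h2⟩⟩
  rw [this, Finset.offDiag_card, Nat.mul_sub_one]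
  rfl

/-- Every line of `A` other than `L` meets `L` in exactly one point. -/
lemma sum_mult_pred_on_line {A : Finset P2} {L : P2} (hL : L ∈ A) :
    ∑ p ∈ (singF A).filter (fun p => Incid p L), (mult A p - 1) = A.card - 1 := by
  have hmaps : (A.erase L : Set P2).MapsTo (fun M => meet L M)
      ((singF A).filter fun p => Incid p L) := by
    intro M hM
    have hM' : M ∈ A.erase L := hM
    rw [Finset.mem_erase] at hM'
    refine Finset.mem_coe.2 (Finset.mem_filter.2 ⟨?_, meet_left hM'.1.symm⟩)
    exact Finset.mem_image.2 ⟨(L, M), Finset.mem_offDiag.2 ⟨hL, hM'.2, hM'.1.symm⟩, rfl⟩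
  rw [← Finset.card_erase_of_mem hL, Finset.card_eq_sum_card_fiberwise hmaps]
  refine Finset.sum_congr rfl fun p hp => ?_
  have hpL := (Finset.mem_filter.1 hp).2
  have : (A.erase L).filter (fun M => meet L M = p)
      = (A.filter fun M => Incid p M).erase L := by
    ext M
    simp only [Finset.mem_filter, Finset.mem_erase]
    constructor
    · rintro ⟨⟨hne, hM⟩, hp⟩
      exact ⟨hne, hM, ((eq_meet_iff hne.symm).1 hp).2⟩
    · rintro ⟨hne, hM, h2⟩
      exact ⟨⟨hne, hM⟩, (eq_meet_iff hne.symm).2 ⟨hpL, h2⟩⟩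
  rw [this, Finset.card_erase_of_mem (Finset.mem_filter.2 ⟨hL, hpL⟩)]
  rfl

lemma singF_eq_union {A : Finset P2} (h3 : ∀ p, mult A p ≤ 3) :
    singF A = multF A 2 ∪ multF A 3 := by
  ext p
  have := h3 p
  rw [Finset.mem_union, mem_multF le_rfl, mem_multF (by norm_num), mem_singF]
  omega

lemma disjoint_multF (A : Finset P2) {r s : ℕ} (h : r ≠ s) :
    Disjoint (multF A r) (multF A s) :=
  Finset.disjoint_left.2 fun _ hp hq =>
    h ((Finset.mem_filter.1 hp).2.symm.trans (Finset.mem_filter.1 hq).2)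

lemma card_pairs_of_le_three {A : Finset P2} (h3 : ∀ p, mult A p ≤ 3) :
    2 * (multF A 2).card + 6 * (multF A 3).card = A.card * (A.card - 1) := by
  rw [← sum_mult_mul_pred, singF_eq_union h3,
    Finset.sum_union (disjoint_multF A (by norm_num)),
    Finset.sum_congr rfl (g := fun _ => 2), Finset.sum_congr (s₁ := multF A 3) rfl (g := fun _ => 6)]
  · simp [mul_comm]
  · intro p hp
    rw [(Finset.mem_filter.1 hp).2]
  · intro p hp
    rw [(Finset.mem_filter.1 hp).2]

lemma card_on_line_of_le_three {A : Finset P2} (h3 : ∀ p, mult A p ≤ 3) {L : P2} (hL : L ∈ A) :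
    ((multF A 2).filter fun p => Incid p L).card
      + 2 * ((multF A 3).filter fun p => Incid p L).card = A.card - 1 := by
  rw [← sum_mult_pred_on_line hL, singF_eq_union h3, Finset.filter_union,
    Finset.sum_union (Finset.disjoint_filter_filter (disjoint_multF A (by norm_num))),
    Finset.sum_congr rfl (g := fun _ => 1),
    Finset.sum_congr (s₁ := (multF A 3).filter _) rfl (g := fun _ => 2)]
  · simp [mul_comm]
  · intro p hp
    rw [(Finset.mem_filter.1 (Finset.mem_filter.1 hp).1).2]
  · intro p hp
    rw [(Finset.mem_filter.1 (Finset.mem_filter.1 hp).1).2]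

/-- Points other than `P` lie on at most one line through `P`, so the points of `X` on the lines
through `P` may be counted line by line. -/
lemma card_on_pencil {A X : Finset P2} {P : P2} (hP : P ∉ X) {m : ℕ}
    (hm : ∀ L ∈ A, Incid P L → (X.filter fun p => Incid p L).card = m) :
    (X.filter fun p => ∃ L ∈ A, Incid P L ∧ Incid p L).card = mult A P * m := by
  have : (X.filter fun p => ∃ L ∈ A, Incid P L ∧ Incid p L)
      = (A.filter fun L => Incid P L).biUnion fun L => X.filter fun p => Incid p L := by
    ext p
    simp only [Finset.mem_filter, Finset.mem_biUnion]
    constructor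
    · rintro ⟨hp, L, hL, h1, h2⟩
      exact ⟨L, ⟨hL, h1⟩, hp, h2⟩
    · rintro ⟨L, ⟨hL, h1⟩, hp, h2⟩
      exact ⟨hp, L, hL, h1, h2⟩
  rw [this, Finset.card_biUnion, Finset.sum_congr rfl (g := fun _ => m)]
  · simp [mult]
  · intro L hL
    rw [Finset.mem_filter] at hL
    exact hm L hL.1 hL.2
  · intro L hL M hM hne
    rw [Finset.mem_coe, Finset.mem_filter] at hL hM
    refine Finset.disjoint_left.2 fun p hp hq => ?_
    rw [Finset.mem_filter] at hp hq
    rcases eq_or_eq_of_incid hp.2 hL.2 hq.2 hM.2 with h | h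
    · exact hP (h ▸ hp.1)
    · exact hne h

/-! ### Adding lines of a pencil -/

lemma mult_union {A S : Finset P2} (h : Disjoint A S) (p : P2) :
    mult (A ∪ S) p = mult A p + mult S p := by
  rw [mult, Finset.filter_union, Finset.card_union_of_disjoint (Finset.disjoint_filter_filter h)]
  rfl

lemma mult_center {S : Finset P2} {P : P2} (hS : ∀ L ∈ S, Incid P L) : mult S P = S.card := by
  rw [mult, Finset.filter_true_of_mem hS]

lemma mult_pencil_le_one {S : Finset P2} {P Q : P2} (hS : ∀ L ∈ S, Incid P L) (hQ : Q ≠ P) :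
    mult S Q ≤ 1 := by
  refine Finset.card_le_one.2 fun L hL M hM => ?_
  rw [Finset.mem_filter] at hL hM
  exact (eq_or_eq_of_incid hL.2 (hS L hL.1) hM.2 (hS M hM.1)).resolve_left hQ

lemma mult_pos_iff {S : Finset P2} {Q : P2} : 0 < mult S Q ↔ ∃ L ∈ S, Incid Q L := by
  rw [mult, Finset.card_pos]
  simp [Finset.Nonempty]

/-- If the line joining `P` and `Q ≠ P` belongs to `A ∪ S`, where `S` is a pencil at `P` disjoint
from `A`, then `Q` gains one line from `S` exactly when it is not joined to `P` in `A`. -/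
lemma mult_pencil_eq {A S : Finset P2} {P Q : P2} (hS : ∀ L ∈ S, Incid P L) (hd : Disjoint A S)
    (hcov : ∃ L ∈ A ∪ S, Incid P L ∧ Incid Q L) (hQ : Q ≠ P) :
    mult S Q = if ∃ L ∈ A, Incid P L ∧ Incid Q L then 0 else 1 := by
  split_ifs with h
  · obtain ⟨L, hL, h1, h2⟩ := h
    by_contra h0
    obtain ⟨M, hM, h3⟩ := mult_pos_iff.1 (Nat.pos_of_ne_zero h0)
    have := (eq_or_eq_of_incid h2 h1 h3 (hS M hM)).resolve_left hQ
    exact Finset.disjoint_left.1 hd hL (this ▸ hM)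
  · refine le_antisymm (mult_pencil_le_one hS hQ) (mult_pos_iff.2 ?_)
    obtain ⟨L, hL, h1, h2⟩ := hcov
    rcases Finset.mem_union.1 hL with hA | hL
    · exact absurd ⟨L, hA, h1, h2⟩ h
    · exact ⟨L, hL, h2⟩

/-- The lines joining `P` to the points of `X` number at most `X.card`, with coincidences allowed;
adding further lines of the infinite pencil at `P` yields a pencil outside `A` with any prescribed
number `N ≥ X.card` of lines. -/
lemma exists_pencil {A X : Finset P2} {P : P2} (hinf : {L : P2 | Incid P L}.Infinite)
    (hX : ∀ Q ∈ X, Q ≠ P ∧ ¬ ∃ L ∈ A, Incid P L ∧ Incid Q L) {N : ℕ} (hN : X.card ≤ N) :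
    ∃ S : Finset P2, S.card = N ∧ (∀ L ∈ S, Incid P L) ∧ Disjoint A S ∧
      ∀ Q ∈ X, ∃ L ∈ S, Incid P L ∧ Incid Q L := by
  have hjoin : ∀ Q ∈ X, Incid P (meet P Q) ∧ Incid Q (meet P Q) := fun Q hQ =>
    ⟨incid_comm.1 (meet_left (hX Q hQ).1.symm), incid_comm.1 (meet_right (hX Q hQ).1.symm)⟩
  obtain ⟨S, h1, h2, h3⟩ := (hinf.sdiff A.finite_toSet).exists_superset_ncard_eq
    (s := (X.image (meet P) : Finset P2)) (k := N) (by
      intro L hL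
      obtain ⟨Q, hQ, rfl⟩ := Finset.mem_image.1 (Finset.mem_coe.1 hL)
      exact ⟨(hjoin Q hQ).1, fun hA => (hX Q hQ).2 ⟨_, hA, hjoin Q hQ⟩⟩)
    (Finset.finite_toSet _)
    (by rw [Set.ncard_coe_finset]; exact Finset.card_image_le.trans hN)
  -- `N = 0` forces `X` to be empty, and otherwise `S.ncard = N > 0` makes `S` finite.
  rcases Nat.eq_zero_or_pos N with rfl | hpos
  · have hX0 : X = ∅ := Finset.card_eq_zero.1 (Nat.le_zero.1 hN)
    subst hX0
    exact ⟨∅, by simp⟩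
  have hfin : S.Finite := Set.finite_of_ncard_pos (h3 ▸ hpos)
  refine ⟨hfin.toFinset, ?_, ?_, ?_, ?_⟩
  · rw [← h3, Set.ncard_eq_toFinset_card S hfin]
  · intro L hL
    exact (h2 (hfin.mem_toFinset.1 hL)).1
  · refine Finset.disjoint_left.2 fun L hA hL => ?_
    exact (h2 (hfin.mem_toFinset.1 hL)).2 hA
  · intro Q hQ
    exact ⟨meet P Q, hfin.mem_toFinset.2 (h1 (Finset.mem_coe.2 (Finset.mem_image_of_mem _ hQ))),
      hjoin Q hQ⟩

/-- The combinatorial heart: an arrangement of `6k` lines with points of multiplicity at most `3`,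
exactly `6k - 3` double points and a triple point `P` each of whose three lines carries exactly one
double point becomes, after adding a suitable pencil of lines at `P`, supersolvable with the
prescribed numbers of multiple points. -/
lemma exists_extension {A : Finset P2} {P : P2} {k : ℕ} (hk : 2 ≤ k)
    (hinf : {L : P2 | Incid P L}.Infinite) (hcard : A.card = 6 * k) (h3 : ∀ p, mult A p ≤ 3)
    (hP : mult A P = 3) (hD : (multF A 2).card = 6 * k - 3)
    (hDL : ∀ L ∈ A, Incid P L → ((multF A 2).filter fun p => Incid p L).card = 1) :
    ∃ B : Finset P2, A ⊆ B ∧ Supersolvable B ∧ B.card = 6 * k ^ 2 ∧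
      tr B (6 * k ^ 2 - 6 * k + 3) = 1 ∧
      tr B 4 = 6 * (k - 1) ^ 2 ∧
      tr B 3 = 15 * k - 12 ∧
      tr B 2 = 36 * k ^ 3 - 72 * k ^ 2 + 42 * k - 3 ∧
      (∀ p : P2, IsSing B p →
        mult B p = 2 ∨ mult B p = 3 ∨ mult B p = 4 ∨ mult B p = 6 * k ^ 2 - 6 * k + 3) := by
  have hT := card_pairs_of_le_three h3
  have hTL : ∀ L ∈ A, Incid P L →
      (((multF A 3).erase P).filter fun p => Incid p L).card = 3 * k - 2 := by
    intro L hL hPL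
    have h1 := card_on_line_of_le_three h3 hL
    rw [hDL L hL hPL, hcard] at h1
    rw [Finset.filter_erase, Finset.card_erase_of_mem
      (Finset.mem_filter.2 ⟨(mem_multF (by norm_num)).2 hP, hPL⟩)]
    omega
  have hPD : P ∉ multF A 2 := by
    rw [mem_multF le_rfl, hP]
    norm_num
  have hPT : P ∈ multF A 3 := (mem_multF (by norm_num)).2 hP
  -- the points of multiplicity `2` and `3`, split according to whether `A` joins them to `P`
  have hDon := card_on_pencil hPD hDL
  have hTon := card_on_pencil (Finset.notMem_erase P (multF A 3)) hTL
  have hDsplit := Finset.card_filter_add_card_filter_not (s := multF A 2)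
    (fun p => ∃ L ∈ A, Incid P L ∧ Incid p L)
  have hTsplit := Finset.card_filter_add_card_filter_not (s := (multF A 3).erase P)
    (fun p => ∃ L ∈ A, Incid P L ∧ Incid p L)
  rw [Finset.card_erase_of_mem hPT] at hTsplit
  rw [hP] at hDon hTon
  rw [hDon, hD] at hDsplit
  rw [hTon] at hTsplit
  rw [hD, hcard] at hT
  set Don := (multF A 2).filter fun p => ∃ L ∈ A, Incid P L ∧ Incid p L with hDon_def
  set Doff := (multF A 2).filter fun p => ¬ ∃ L ∈ A, Incid P L ∧ Incid p L with hDoff_def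
  set Ton := ((multF A 3).erase P).filter fun p => ∃ L ∈ A, Incid P L ∧ Incid p L with hTon_def
  set Toff := ((multF A 3).erase P).filter fun p => ¬ ∃ L ∈ A, Incid P L ∧ Incid p L
    with hToff_def
  obtain ⟨j, rfl⟩ : ∃ j, k = j + 2 := ⟨k - 2, by omega⟩
  have hDoff : Doff.card = 6 * j + 6 := by omega
  have e1 : 6 * (j + 2) * (6 * (j + 2) - 1) = 36 * j ^ 2 + 138 * j + 132 := by
    rw [show 6 * (j + 2) - 1 = 6 * j + 11 by omega]; ring
  have hToff : Toff.card = 6 * (j + 1) ^ 2 := by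
    rw [e1] at hT
    have : 6 * (j + 1) ^ 2 = 6 * j ^ 2 + 12 * j + 6 := by ring
    omega
  have e2 : 6 * (j + 2) ^ 2 - 6 * (j + 2) = 6 * j ^ 2 + 18 * j + 12 := by
    have : 6 * (j + 2) ^ 2 = 6 * j ^ 2 + 24 * j + 24 := by ring
    omega
  rw [e2]
  obtain ⟨S, hScard, hS, hd, hcov⟩ := exists_pencil (A := A) (X := Doff ∪ Toff) (P := P)
    (N := 6 * j ^ 2 + 18 * j + 12) hinf (by
      intro Q hQ
      rcases Finset.mem_union.1 hQ with hQ | hQ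
      · rw [hDoff_def, Finset.mem_filter] at hQ
        exact ⟨fun h => hPD (h ▸ hQ.1), hQ.2⟩
      · rw [hToff_def, Finset.mem_filter] at hQ
        exact ⟨Finset.ne_of_mem_erase hQ.1, hQ.2⟩)
    ((Finset.card_union_le _ _).trans (by rw [hDoff, hToff]; ring_nf; rfl))
  have hcov' : ∀ Q, 2 ≤ mult A Q → Q ≠ P → ∃ L ∈ A ∪ S, Incid P L ∧ Incid Q L := by
    intro Q hQ hne
    by_cases hA : ∃ L ∈ A, Incid P L ∧ Incid Q L
    · obtain ⟨L, hL, h⟩ := hA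
      exact ⟨L, Finset.mem_union_left _ hL, h⟩
    · obtain ⟨L, hL, h⟩ := hcov Q (by
        have := h3 Q
        rw [Finset.mem_union, hDoff_def, hToff_def, Finset.mem_filter, Finset.mem_filter,
          Finset.mem_erase, mem_multF le_rfl, mem_multF (by norm_num)]
        rcases (by omega : mult A Q = 2 ∨ mult A Q = 3) with h | h
        · exact Or.inl ⟨h, hA⟩
        · exact Or.inr ⟨⟨hne, h⟩, hA⟩)
      exact ⟨L, Finset.mem_union_right _ hL, h⟩
  have hBP : mult (A ∪ S) P = 6 * j ^ 2 + 18 * j + 12 + 3 := by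
    rw [mult_union hd, mult_center hS, hP, hScard, add_comm]
  have hBQ : ∀ Q, Q ≠ P → mult (A ∪ S) Q ≤ 4 := by
    intro Q hQ
    have := h3 Q
    have := mult_pencil_le_one hS hQ
    rw [mult_union hd]
    omega
  have hBcard : (A ∪ S).card = 6 * (j + 2) ^ 2 := by
    rw [Finset.card_union_of_disjoint hd, hcard, hScard]
    ring
  have hm1 : multF (A ∪ S) (6 * j ^ 2 + 18 * j + 12 + 3) = {P} := by
    ext Q
    rw [mem_multF (by omega), Finset.mem_singleton]
    constructor
    · intro h
      by_contra hne
      have := hBQ Q hne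
      omega
    · rintro rfl
      exact hBP
  have hm4 : multF (A ∪ S) 4 = Toff := by
    ext Q
    rw [mem_multF (by norm_num), hToff_def, Finset.mem_filter, Finset.mem_erase,
      mem_multF (by norm_num)]
    rcases eq_or_ne Q P with rfl | hne
    · simp only [ne_eq, not_true, false_and, iff_false]
      omega
    · have h3Q := h3 Q
      have h1 := mult_pencil_le_one hS hne
      have hc := hcov' Q
      rw [mult_union hd]
      constructor
      · intro h
        have hA : mult A Q = 3 := by omega
        have hs := mult_pencil_eq hS hd (hc (by omega) hne) hne
        refine ⟨⟨hne, hA⟩, fun hjoin => ?_⟩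
        rw [if_pos hjoin] at hs
        omega
      · rintro ⟨⟨-, hA⟩, hjoin⟩
        have hs := mult_pencil_eq hS hd (hc (by omega) hne) hne
        rw [if_neg hjoin] at hs
        omega
  have hm3 : multF (A ∪ S) 3 = Ton ∪ Doff := by
    ext Q
    rw [mem_multF (by norm_num), Finset.mem_union, hTon_def, hDoff_def, Finset.mem_filter,
      Finset.mem_filter, Finset.mem_erase, mem_multF (by norm_num), mem_multF le_rfl]
    rcases eq_or_ne Q P with rfl | hne
    · simp only [ne_eq, not_true, false_and, false_or, hP]
      omega
    · have h3Q := h3 Q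
      have h1 := mult_pencil_le_one hS hne
      have hc := hcov' Q
      rw [mult_union hd]
      constructor
      · intro h
        have hs := mult_pencil_eq hS hd (hc (by omega) hne) hne
        by_cases hjoin : ∃ L ∈ A, Incid P L ∧ Incid Q L
        · rw [if_pos hjoin] at hs
          exact Or.inl ⟨⟨hne, by omega⟩, hjoin⟩
        · rw [if_neg hjoin] at hs
          exact Or.inr ⟨by omega, hjoin⟩
      · rintro (⟨⟨-, hA⟩, hjoin⟩ | ⟨hA, hjoin⟩)
        · have hs := mult_pencil_eq hS hd (hc (by omega) hne) hne
          rw [if_pos hjoin] at hs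
          omega
        · have hs := mult_pencil_eq hS hd (hc (by omega) hne) hne
          rw [if_neg hjoin] at hs
          omega
  have hdTD : Disjoint Ton Doff :=
    ((disjoint_multF A (by norm_num : (3 : ℕ) ≠ 2)).mono_left (Finset.erase_subset _ _)).mono
      (Finset.filter_subset _ _) (Finset.filter_subset _ _)
  have hc3 : (multF (A ∪ S) 3).card = 15 * j + 18 := by
    rw [hm3, Finset.card_union_of_disjoint hdTD, hTon, hDoff]
    omega
  have hall : ∀ p : P2, IsSing (A ∪ S) p →
      mult (A ∪ S) p = 2 ∨ mult (A ∪ S) p = 3 ∨ mult (A ∪ S) p = 4 ∨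
        mult (A ∪ S) p = 6 * j ^ 2 + 18 * j + 12 + 3 := by
    intro p hp
    rcases eq_or_ne p P with rfl | hne
    · exact Or.inr (Or.inr (Or.inr hBP))
    · have := hBQ p hne
      rw [IsSing] at hp
      omega
  -- counting pairs of lines of `A ∪ S` determines the number of double points
  have hpairs : 2 * (multF (A ∪ S) 2).card + 6 * (15 * j + 18) + 12 * (6 * (j + 1) ^ 2)
      + (6 * j ^ 2 + 18 * j + 15) * (6 * j ^ 2 + 18 * j + 14)
      = 6 * (j + 2) ^ 2 * (6 * (j + 2) ^ 2 - 1) := by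
    have hsum := sum_mult_mul_pred (A ∪ S)
    have hU : singF (A ∪ S) = multF (A ∪ S) 2 ∪ (multF (A ∪ S) 3 ∪ (multF (A ∪ S) 4
        ∪ multF (A ∪ S) (6 * j ^ 2 + 18 * j + 12 + 3))) := by
      ext p
      simp only [Finset.mem_union]
      rw [mem_multF le_rfl, mem_multF (by norm_num), mem_multF (by norm_num),
        mem_multF (by omega), mem_singF]
      constructor
      · exact hall p
      · omega
    have hconst : ∀ r, ∑ p ∈ multF (A ∪ S) r, mult (A ∪ S) p * (mult (A ∪ S) p - 1)
        = (multF (A ∪ S) r).card * (r * (r - 1)) := by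
      intro r
      rw [Finset.sum_congr rfl (g := fun _ => r * (r - 1)), Finset.sum_const, smul_eq_mul]
      intro p hp
      rw [(Finset.mem_filter.1 hp).2]
    rw [hU, Finset.sum_union, Finset.sum_union, Finset.sum_union, hconst, hconst, hconst, hconst,
      hc3, hm4, hToff, hm1, hBcard, Finset.card_singleton] at hsum
    · rw [← hsum, show 6 * j ^ 2 + 18 * j + 12 + 3 - 1 = 6 * j ^ 2 + 18 * j + 14 by omega]
      norm_num
      ring
    · exact disjoint_multF _ (by omega)
    · rw [Finset.disjoint_union_right]
      exact ⟨disjoint_multF _ (by omega), disjoint_multF _ (by omega)⟩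
    · rw [Finset.disjoint_union_right, Finset.disjoint_union_right]
      exact ⟨disjoint_multF _ (by omega), disjoint_multF _ (by omega),
        disjoint_multF _ (by omega)⟩
  have hc2 : (multF (A ∪ S) 2).card = 36 * j ^ 3 + 144 * j ^ 2 + 186 * j + 81 := by
    have e3 : 6 * (j + 2) ^ 2 - 1 = 6 * j ^ 2 + 24 * j + 23 := by
      have : 6 * (j + 2) ^ 2 = 6 * j ^ 2 + 24 * j + 24 := by ring
      omega
    rw [e3] at hpairs
    nlinarith [hpairs]
  refine ⟨A ∪ S, Finset.subset_union_left, ⟨P, ?_, ?_⟩, hBcard, ?_, ?_, ?_, ?_, hall⟩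
  · rw [IsSing, hBP]
    omega
  · intro Q hQ hne
    rw [IsSing, mult_union hd] at hQ
    by_cases hA : 2 ≤ mult A Q
    · exact hcov' Q hA hne
    · obtain ⟨L, hL, hQL⟩ := mult_pos_iff.1 (show 0 < mult S Q by omega)
      exact ⟨L, Finset.mem_union_right _ hL, hS L hL, hQL⟩
  · rw [tr_eq_card (by omega), hm1, Finset.card_singleton]
  · rw [tr_eq_card (by norm_num), hm4, hToff]
    rfl
  · rw [tr_eq_card (by norm_num), hc3]
    omega
  · rw [tr_eq_card le_rfl, hc2]
    have e4 : 36 * (j + 2) ^ 3 = 36 * j ^ 3 + 216 * j ^ 2 + 432 * j + 288 := by ring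
    have e5 : 72 * (j + 2) ^ 2 = 72 * j ^ 2 + 288 * j + 288 := by ring
    rw [e4, e5]
    omega

/-! ### The lines of the Böröczky arrangement as a cubic family -/

lemma cubicVec_ne_zero (v : ℂ) :
    ![v - v ^ 2, -Complex.I * (v ^ 2 + v), v ^ 3 - 1] ≠ 0 := by
  intro h
  have h0 : v - v ^ 2 = 0 := by simpa using congrFun h 0
  have h1 : Complex.I = 0 ∨ v ^ 2 + v = 0 := by simpa using congrFun h 1
  have h2 : v ^ 3 - 1 = 0 := by simpa using congrFun h 2
  have h1 := h1.resolve_left Complex.I_ne_zero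
  have hv : v = 0 := by linear_combination (h0 + h1) / 2
  rw [hv] at h2
  norm_num at h2

/-- The line `w v³ - (x + iy) v² + (x - iy) v - w = 0` in the coordinates `[x : y : w]`.
For `v = e^{iα}` it is the line joining the points of the unit circle at angles `α`, `π - 2α`. -/
def cubicLine (v : ℂ) : P2 :=
  mkP (v - v ^ 2) (-Complex.I * (v ^ 2 + v)) (v ^ 3 - 1) (cubicVec_ne_zero v)

lemma incid_cubicLine {p : P2} {v : ℂ} :
    Incid p (cubicLine v) ↔ p.rep 2 * v ^ 3 - (p.rep 0 + Complex.I * p.rep 1) * v ^ 2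
      + (p.rep 0 - Complex.I * p.rep 1) * v - p.rep 2 = 0 := by
  rw [cubicLine, incid_mkP]
  constructor <;> intro h <;> linear_combination h

lemma cubicLine_injOn : Set.InjOn cubicLine {v | v ≠ 0} := by
  intro u hu v hv h
  have hu : u ≠ 0 := hu
  have hv : v ≠ 0 := hv
  rw [cubicLine, cubicLine, mkP, mkP, Projectivization.mk_eq_mk_iff'] at h
  obtain ⟨a, ha⟩ := h
  have h0 : a * (v - v ^ 2) = u - u ^ 2 := by simpa using congrFun ha 0
  have h1 : a * (-Complex.I * (v ^ 2 + v)) = -Complex.I * (u ^ 2 + u) := by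
    simpa using congrFun ha 1
  have h1' : a * (v ^ 2 + v) = u ^ 2 + u :=
    mul_left_cancel₀ (neg_ne_zero.2 Complex.I_ne_zero) (by linear_combination h1)
  have h2 : a * v = u := by linear_combination (h0 + h1') / 2
  have h3 : a * v ^ 2 = u ^ 2 := by linear_combination (h1' - h0) / 2
  have h4 : u * (u - v) = 0 := by linear_combination -h3 + v * h2
  exact sub_eq_zero.1 ((mul_eq_zero.1 h4).resolve_left hu)

/-- The cubic attached to a common point of two lines of the family has constant coefficient and
leading coefficient opposite, so its roots `u`, `v`, `s` satisfy `s u v = 1`. -/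
lemma incid_third {p : P2} {u v : ℂ} (hu : u ≠ 0) (hv : v ≠ 0) (huv : u ≠ v)
    (h1 : Incid p (cubicLine u)) (h2 : Incid p (cubicLine v)) (s : ℂ) :
    Incid p (cubicLine s) ↔ s = u ∨ s = v ∨ s * u * v = 1 := by
  rw [incid_cubicLine] at *
  set x := p.rep 0 with hx
  set y := p.rep 1 with hy
  set w := p.rep 2 with hw
  have hsub : u - v ≠ 0 := sub_ne_zero.2 huv
  -- the divided difference of the two equations
  have h3 : w * (u ^ 2 + u * v + v ^ 2) - (x + Complex.I * y) * (u + v)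
      + (x - Complex.I * y) = 0 :=
    mul_left_cancel₀ hsub (by linear_combination h1 - h2)
  have h4 : (x + Complex.I * y) * (u * v) = w * (u * v * (u + v) + 1) := by
    linear_combination h1 - u * h3
  have hw0 : w ≠ 0 := by
    intro h0
    rw [h0] at h3 h4
    have h5 : x + Complex.I * y = 0 :=
      (mul_eq_zero.1 (by linear_combination h4 :
        (x + Complex.I * y) * (u * v) = 0)).resolve_right (mul_ne_zero hu hv)
    have h6 : x - Complex.I * y = 0 := by linear_combination h3 + (u + v) * h5
    have h7 : x = 0 := by linear_combination (h5 + h6) / 2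
    have h8 : y = 0 := by
      refine (mul_eq_zero.1 (?_ : Complex.I * y = 0)).resolve_left Complex.I_ne_zero
      linear_combination (h5 - h6) / 2
    apply p.rep_nonzero
    ext i
    fin_cases i
    · exact h7
    · exact h8
    · exact h0
  have key : (u * v) * (w * s ^ 3 - (x + Complex.I * y) * s ^ 2
      + (x - Complex.I * y) * s - w) = w * ((s - u) * ((s - v) * (s * u * v - 1))) := by
    linear_combination (s * u * v) * h3 + (s * (u + v) - s ^ 2) * h4
  rw [← mul_right_inj' (mul_ne_zero hu hv), key, mul_zero, mul_eq_zero, mul_eq_zero, mul_eq_zero,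
    sub_eq_zero, sub_eq_zero, sub_eq_zero]
  simp [hw0]

lemma boroczkyLine_eq {n : ℕ} (j : ℕ) :
    boroczkyLine n j = cubicLine (Complex.exp (2 * Real.pi * Complex.I / n) ^ j) := by
  set e : ℂ := Complex.exp ((j * Real.pi / n : ℝ) * Complex.I) with he
  have hv : Complex.exp (2 * Real.pi * Complex.I / n) ^ j = e ^ 2 := by
    rw [he, ← Complex.exp_nat_mul, ← Complex.exp_nat_mul]
    congr 1
    push_cast
    ring
  have he0 : e ≠ 0 := Complex.exp_ne_zero _
  have hI := Complex.I_sq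
  have c1 : Real.cos ((Real.pi - 2 * j * Real.pi / n) / 2) = Real.sin (j * Real.pi / n) := by
    rw [← Real.cos_pi_div_two_sub]; congr 1; ring
  have c2 : Real.sin ((Real.pi - 2 * j * Real.pi / n) / 2) = Real.cos (j * Real.pi / n) := by
    rw [← Real.sin_pi_div_two_sub]; congr 1; ring
  have c3 : Real.cos ((3 * (2 * j * Real.pi / n) - Real.pi) / 2)
      = Real.sin (3 * (j * Real.pi / n)) := by
    rw [← Real.cos_sub_pi_div_two]; congr 1; ring
  have d1 : ((Real.sin (j * Real.pi / n) : ℝ) : ℂ) = (e⁻¹ - e) * Complex.I / 2 := by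
    rw [Complex.ofReal_sin, Complex.sin, he, ← Complex.exp_neg, neg_mul]
  have d2 : ((Real.cos (j * Real.pi / n) : ℝ) : ℂ) = (e + e⁻¹) / 2 := by
    rw [Complex.ofReal_cos, Complex.cos, he, ← Complex.exp_neg, neg_mul]
  have d3 : ((Real.sin (3 * (j * Real.pi / n)) : ℝ) : ℂ)
      = (e⁻¹ ^ 3 - e ^ 3) * Complex.I / 2 := by
    rw [Complex.ofReal_sin, Complex.sin, he, ← Complex.exp_neg, ← Complex.exp_nat_mul,
      ← Complex.exp_nat_mul]
    push_cast
    ring_nf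
  rw [hv, boroczkyLine, cubicLine, eq_comm, mkP, mkP, Projectivization.mk_eq_mk_iff']
  refine ⟨-2 * Complex.I * e ^ 3, ?_⟩
  rw [c1, c2, c3, d1, d2, d3]
  ext i
  fin_cases i
  · simp
    field_simp
    linear_combination (e ^ 2 - 1) * hI
  · simp
    field_simp
  · simp
    field_simp
    linear_combination (1 - e ^ 6) * hI

lemma boroczky_eq {n : ℕ} (hn : 0 < n) :
    Boroczky n = (Polynomial.nthRootsFinset n (1 : ℂ)).image cubicLine := by
  have hζ := Complex.isPrimitiveRoot_exp n hn.ne'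
  have : NeZero n := ⟨hn.ne'⟩
  ext L
  simp only [Boroczky, Finset.mem_image, Finset.mem_range, boroczkyLine_eq,
    Polynomial.mem_nthRootsFinset hn]
  constructor
  · rintro ⟨j, -, rfl⟩
    exact ⟨_, by rw [pow_right_comm, hζ.pow_eq_one, one_pow], rfl⟩
  · rintro ⟨v, hv, rfl⟩
    obtain ⟨j, hj, rfl⟩ := hζ.eq_pow_of_pow_eq_one hv
    exact ⟨j, hj, rfl⟩

/-- The parameters of the lines of `Boroczky n` passing through `p`. -/
def params (n : ℕ) (p : P2) : Finset ℂ :=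
  (Polynomial.nthRootsFinset n (1 : ℂ)).filter fun v => Incid p (cubicLine v)

lemma mem_params {n : ℕ} (hn : 0 < n) {p : P2} {v : ℂ} :
    v ∈ params n p ↔ v ^ n = 1 ∧ Incid p (cubicLine v) := by
  rw [params, Finset.mem_filter, Polynomial.mem_nthRootsFinset hn]

lemma ne_zero_of_pow {n : ℕ} (hn : 0 < n) {v : ℂ} (hv : v ^ n = 1) : v ≠ 0 := by
  rintro rfl
  rw [zero_pow hn.ne'] at hv
  exact zero_ne_one hv

lemma cubicLine_injOn_roots {n : ℕ} (hn : 0 < n) :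
    Set.InjOn cubicLine (Polynomial.nthRootsFinset n (1 : ℂ)) :=
  cubicLine_injOn.mono fun _ hv =>
    ne_zero_of_pow hn ((Polynomial.mem_nthRootsFinset hn 1).1 (Finset.mem_coe.1 hv))

lemma mult_boroczky {n : ℕ} (hn : 0 < n) (p : P2) : mult (Boroczky n) p = (params n p).card := by
  rw [mult, boroczky_eq hn, Finset.filter_image, Finset.card_image_of_injOn]
  · rfl
  · exact (cubicLine_injOn_roots hn).mono fun v hv =>
      Finset.mem_coe.2 (Finset.mem_filter.1 (Finset.mem_coe.1 hv)).1

lemma card_roots_of_unity {n : ℕ} (hn : 0 < n) :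
    (Polynomial.nthRootsFinset n (1 : ℂ)).card = n :=
  (Complex.isPrimitiveRoot_exp n hn.ne').card_nthRootsFinset

lemma card_boroczky {n : ℕ} (hn : 0 < n) : (Boroczky n).card = n := by
  rw [boroczky_eq hn, Finset.card_image_of_injOn (cubicLine_injOn_roots hn),
    card_roots_of_unity hn]

lemma eq_inv_iff_of_ne_zero {a b : ℂ} (hb : b ≠ 0) : a = b⁻¹ ↔ a * b = 1 :=
  ⟨by rintro rfl; exact inv_mul_cancel₀ hb, eq_inv_of_mul_eq_one_left⟩

lemma params_eq {n : ℕ} (hn : 0 < n) {p : P2} {u v : ℂ} (hu : u ^ n = 1) (hv : v ^ n = 1)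
    (huv : u ≠ v) (h1 : Incid p (cubicLine u)) (h2 : Incid p (cubicLine v)) :
    params n p = {u, v, (u * v)⁻¹} := by
  have hu0 := ne_zero_of_pow hn hu
  have hv0 := ne_zero_of_pow hn hv
  ext s
  rw [mem_params hn, incid_third hu0 hv0 huv h1 h2]
  simp only [Finset.mem_insert, Finset.mem_singleton]
  have hs : s * u * v = 1 ↔ s = (u * v)⁻¹ := by
    rw [mul_assoc, eq_inv_iff_of_ne_zero (mul_ne_zero hu0 hv0)]
  rw [hs]
  constructor
  · exact And.right
  · intro h
    refine ⟨?_, h⟩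
    rcases h with rfl | rfl | rfl
    · exact hu
    · exact hv
    · rw [inv_pow, mul_pow, hu, hv]; norm_num

lemma mult_boroczky_le_three {n : ℕ} (hn : 0 < n) (p : P2) : mult (Boroczky n) p ≤ 3 := by
  rw [mult_boroczky hn]
  by_contra! h
  obtain ⟨u, hu, v, hv, huv⟩ := Finset.one_lt_card.1 (by omega : 1 < (params n p).card)
  rw [mem_params hn] at hu hv
  rw [params_eq hn hu.1 hv.1 huv hu.2 hv.2] at h
  have := Finset.card_le_three (a := u) (b := v) (c := (u * v)⁻¹)
  omega

/-! ### Double points of the Böröczky arrangement -/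

lemma ne_inv_sq_iff {v : ℂ} (hv : v ≠ 0) : v ≠ (v ^ 2)⁻¹ ↔ v ^ 3 ≠ 1 := by
  rw [ne_eq, ne_eq, eq_inv_iff_of_ne_zero (pow_ne_zero 2 hv), ← pow_succ']

/-- The double point with parameters `v, v, v⁻²`. -/
def dbl (v : ℂ) : P2 := meet (cubicLine v) (cubicLine (v ^ 2)⁻¹)

lemma params_dbl {n : ℕ} (hn : 0 < n) {v : ℂ} (hv : v ^ n = 1) (h3 : v ^ 3 ≠ 1) :
    params n (dbl v) = {v, (v ^ 2)⁻¹} := by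
  have hv0 := ne_zero_of_pow hn hv
  have hne := (ne_inv_sq_iff hv0).2 h3
  have hv2 : ((v ^ 2)⁻¹) ^ n = 1 := by
    rw [inv_pow, pow_right_comm, hv]; norm_num
  have hL : cubicLine v ≠ cubicLine (v ^ 2)⁻¹ := fun h =>
    hne (cubicLine_injOn hv0 (inv_ne_zero (pow_ne_zero 2 hv0)) h)
  rw [dbl, params_eq hn hv hv2 hne (meet_left hL) (meet_right hL)]
  have : (v * (v ^ 2)⁻¹)⁻¹ = v := by field_simp
  rw [this]
  ext s
  simp only [Finset.mem_insert, Finset.mem_singleton]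
  tauto

lemma multF_two_boroczky {n : ℕ} (hn : 0 < n) :
    multF (Boroczky n) 2
      = ((Polynomial.nthRootsFinset n (1 : ℂ)).filter fun v => v ^ 3 ≠ 1).image dbl := by
  ext p
  rw [mem_multF le_rfl, mult_boroczky hn, Finset.mem_image]
  constructor
  · intro h
    obtain ⟨u, v, huv, hp⟩ := Finset.card_eq_two.1 h
    obtain ⟨hu, hu'⟩ := (mem_params hn).1 (hp ▸ Finset.mem_insert_self u {v})
    obtain ⟨hv, hv'⟩ := (mem_params hn).1
      (hp ▸ Finset.mem_insert_of_mem (Finset.mem_singleton_self v) : v ∈ params n p)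
    have hu0 := ne_zero_of_pow hn hu
    have hv0 := ne_zero_of_pow hn hv
    have h3 : (u * v)⁻¹ ∈ ({u, v} : Finset ℂ) := by
      rw [← hp, params_eq hn hu hv huv hu' hv']
      simp
    have build : ∀ a b : ℂ, a ^ n = 1 → a ≠ b → Incid p (cubicLine a) → Incid p (cubicLine b) →
        b ≠ 0 → (a * b)⁻¹ = a → ∃ c ∈ (Polynomial.nthRootsFinset n (1 : ℂ)).filter
          (fun v => v ^ 3 ≠ 1), dbl c = p := by
      intro a b ha hab h1 h2 hb0 h
      have ha0 := ne_zero_of_pow hn ha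
      have hb : b = (a ^ 2)⁻¹ := by
        rw [eq_inv_iff_of_ne_zero (pow_ne_zero 2 ha0)]
        have := eq_inv_iff_of_ne_zero (mul_ne_zero ha0 hb0) |>.1 h.symm
        linear_combination this
      rw [hb] at hab h2
      refine ⟨a, Finset.mem_filter.2 ⟨(Polynomial.mem_nthRootsFinset hn 1).2 ha,
        (ne_inv_sq_iff ha0).1 hab⟩, ?_⟩
      refine (eq_meet_iff fun hL => hab ?_).2 ⟨h1, h2⟩
      exact cubicLine_injOn ha0 (inv_ne_zero (pow_ne_zero 2 ha0)) hL
    rcases Finset.mem_insert.1 h3 with h | h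
    · exact build u v hu huv hu' hv' hv0 h
    · exact build v u hv huv.symm hv' hu' hu0 (by rw [mul_comm]; exact Finset.mem_singleton.1 h)
  · rintro ⟨v, hv, rfl⟩
    rw [Finset.mem_filter, Polynomial.mem_nthRootsFinset hn] at hv
    rw [params_dbl hn hv.1 hv.2, Finset.card_pair]
    exact (ne_inv_sq_iff (ne_zero_of_pow hn hv.1)).2 hv.2

lemma dbl_injOn {n : ℕ} (hn : 0 < n) : Set.InjOn dbl
    ((Polynomial.nthRootsFinset n (1 : ℂ)).filter fun v => v ^ 3 ≠ 1) := by
  intro u hu v hv h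
  rw [Finset.mem_coe, Finset.mem_filter, Polynomial.mem_nthRootsFinset hn] at hu hv
  have hv0 := ne_zero_of_pow hn hv.1
  have hp : ({u, (u ^ 2)⁻¹} : Finset ℂ) = {v, (v ^ 2)⁻¹} := by
    rw [← params_dbl hn hu.1 hu.2, ← params_dbl hn hv.1 hv.2, h]
  have h1 : u ∈ ({v, (v ^ 2)⁻¹} : Finset ℂ) := hp ▸ Finset.mem_insert_self _ _
  have h2 : v ∈ ({u, (u ^ 2)⁻¹} : Finset ℂ) := hp ▸ Finset.mem_insert_self _ _
  rw [Finset.mem_insert, Finset.mem_singleton] at h1 h2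
  rcases h1 with h1 | h1
  · exact h1
  rcases h2 with h2 | h2
  · exact h2.symm
  -- otherwise `u = v⁻²` and `v = u⁻²`, whence `v = v⁴`
  exfalso
  apply hv.2
  have h4 : v = v * v ^ 3 := by
    conv_lhs => rw [h2, h1]
    field_simp
  exact (mul_left_cancel₀ hv0 (by rw [← h4, mul_one])).symm

lemma filter_cube {n : ℕ} (hn : 0 < n) (h3 : 3 ∣ n) :
    (Polynomial.nthRootsFinset n (1 : ℂ)).filter (fun v => v ^ 3 = 1)
      = Polynomial.nthRootsFinset 3 (1 : ℂ) := by
  obtain ⟨m, rfl⟩ := h3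
  ext v
  rw [Finset.mem_filter, Polynomial.mem_nthRootsFinset hn,
    Polynomial.mem_nthRootsFinset (by norm_num)]
  refine ⟨And.right, fun h => ⟨?_, h⟩⟩
  rw [pow_mul, h, one_pow]

lemma card_double {n : ℕ} (hn : 0 < n) (h3 : 3 ∣ n) : (multF (Boroczky n) 2).card = n - 3 := by
  rw [multF_two_boroczky hn, Finset.card_image_of_injOn (dbl_injOn hn)]
  have h := Finset.card_filter_add_card_filter_not (s := Polynomial.nthRootsFinset n (1 : ℂ))
    (fun v => v ^ 3 = 1)
  rw [filter_cube hn h3, card_roots_of_unity hn, card_roots_of_unity (by norm_num)] at h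
  simp only [ne_eq]
  omega

/-- On a line of parameter `a` with `a³ = 1` the double points `dbl v` have `v⁻² = a`, that is
`v = ± a`, and `v = a` is excluded; so `dbl (-a)` is the only one. -/
lemma card_double_on_line {n : ℕ} (hn : 0 < n) (h2 : 2 ∣ n) {a : ℂ} (ha : a ^ n = 1)
    (ha3 : a ^ 3 = 1) :
    ((multF (Boroczky n) 2).filter fun p => Incid p (cubicLine a)).card = 1 := by
  rw [Finset.card_eq_one]
  refine ⟨dbl (-a), ?_⟩
  have hma : (-a) ^ n = 1 := by rw [(even_iff_two_dvd.2 h2).neg_pow, ha]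
  have hma3 : (-a) ^ 3 ≠ 1 := by
    rw [(by decide : Odd 3).neg_pow, ha3]
    norm_num
  have ha0 := ne_zero_of_pow hn ha
  ext p
  rw [Finset.mem_filter, multF_two_boroczky hn, Finset.mem_image, Finset.mem_singleton]
  constructor
  · rintro ⟨⟨v, hv, rfl⟩, hinc⟩
    rw [Finset.mem_filter, Polynomial.mem_nthRootsFinset hn] at hv
    have hmem : a ∈ params n (dbl v) := (mem_params hn).2 ⟨ha, hinc⟩
    rw [params_dbl hn hv.1 hv.2, Finset.mem_insert, Finset.mem_singleton] at hmem
    rcases hmem with h | h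
    · exact absurd (h ▸ ha3) hv.2
    · have hv0 := ne_zero_of_pow hn hv.1
      rw [eq_inv_iff_of_ne_zero (pow_ne_zero 2 hv0)] at h
      have hsq : v ^ 2 = a ^ 2 := mul_left_cancel₀ ha0 (by linear_combination h - ha3)
      rcases sq_eq_sq_iff_eq_or_eq_neg.1 hsq with h | h
      · exact absurd (h ▸ ha3) hv.2
      · rw [h]
  · rintro rfl
    refine ⟨⟨-a, Finset.mem_filter.2 ⟨(Polynomial.mem_nthRootsFinset hn 1).2 hma, hma3⟩, rfl⟩, ?_⟩
    refine ((mem_params hn).1 (?_ : a ∈ params n (dbl (-a)))).2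
    rw [params_dbl hn hma hma3, Finset.mem_insert, Finset.mem_singleton]
    right
    rw [eq_inv_iff_of_ne_zero (pow_ne_zero 2 (neg_ne_zero.2 ha0))]
    linear_combination ha3

/-! ### The centre of the circle -/

/-- The centre `[0 : 0 : 1]` of the unit circle. -/
def centre : P2 := mkP 0 0 1 (vne₂ one_ne_zero)

lemma incid_centre {a b c : ℂ} (h : ![a, b, c] ≠ 0) : Incid centre (mkP a b c h) ↔ c = 0 := by
  rw [incid_iff_orthogonal, centre, mkP, mkP, Projectivization.orthogonal_mk]
  simp [dotProduct, Fin.sum_univ_three]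

lemma incid_centre_cubicLine {v : ℂ} : Incid centre (cubicLine v) ↔ v ^ 3 = 1 := by
  rw [cubicLine, incid_centre, sub_eq_zero]

lemma mult_centre {n : ℕ} (hn : 0 < n) (h3 : 3 ∣ n) : mult (Boroczky n) centre = 3 := by
  rw [mult_boroczky hn, params]
  simp only [incid_centre_cubicLine]
  rw [filter_cube hn h3, card_roots_of_unity (by norm_num)]

lemma infinite_pencil_centre : {L : P2 | Incid centre L}.Infinite := by
  refine Set.infinite_of_injective_forall_mem
    (f := fun t : ℂ => mkP 1 t 0 (vne₀ one_ne_zero)) ?_ fun t => (incid_centre _).2 rfl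
  intro s t h
  simp only [mkP] at h
  rw [Projectivization.mk_eq_mk_iff'] at h
  obtain ⟨a, ha⟩ := h
  have h0 : a = 1 := by simpa using congrFun ha 0
  have h1 : a * t = s := by simpa using congrFun ha 1
  rw [← h1, h0, one_mul]

/-- For `k ≥ 2`, `extSS(B_{6k}) ≤ 6k² - 6k`; more precisely there is a
supersolvable arrangement `B ⊇ B_{6k}` with `6k²` lines whose singular points consist of exactly
one point of multiplicity `6k² - 6k + 3`, exactly `6(k-1)²` quadruple points, exactly `15k - 12`
triple points and exactly `36k³ - 72k² + 42k - 3` double points. -/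
theorem stmt_6 (k : ℕ) (hk : 2 ≤ k) :
    extSS (Boroczky (6 * k)) ≤ 6 * k ^ 2 - 6 * k ∧
    ∃ B : Finset P2, Boroczky (6 * k) ⊆ B ∧ Supersolvable B ∧ B.card = 6 * k ^ 2 ∧
      tr B (6 * k ^ 2 - 6 * k + 3) = 1 ∧
      tr B 4 = 6 * (k - 1) ^ 2 ∧
      tr B 3 = 15 * k - 12 ∧
      tr B 2 = 36 * k ^ 3 - 72 * k ^ 2 + 42 * k - 3 ∧
      (∀ p : P2, IsSing B p →
        mult B p = 2 ∨ mult B p = 3 ∨ mult B p = 4 ∨ mult B p = 6 * k ^ 2 - 6 * k + 3) := by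
  have hn : 0 < 6 * k := by omega
  have hcard := card_boroczky hn
  obtain ⟨B, hB⟩ := exists_extension hk infinite_pencil_centre hcard (mult_boroczky_le_three hn)
    (mult_centre hn ⟨2 * k, by ring⟩) (card_double hn ⟨2 * k, by ring⟩) (by
      intro L hL hP
      rw [boroczky_eq hn, Finset.mem_image] at hL
      obtain ⟨a, ha, rfl⟩ := hL
      exact card_double_on_line hn ⟨3 * k, by ring⟩ ((Polynomial.mem_nthRootsFinset hn 1).1 ha)
        (incid_centre_cubicLine.1 hP))
  refine ⟨Nat.sInf_le ⟨B, hB.1, hB.2.1, ?_⟩, B, hB⟩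
  have : 6 * k ≤ 6 * k ^ 2 := by nlinarith
  rw [hB.2.2.1, hcard]
  omega
end
end
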